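/- arXiv:2112.15101 — 3 statements merged into one kernel-verified Lean document; each statement's English description precedes it below -/
import Mathlib

section
/- Let m ≥ 2 be an integer and Δ > 1. There is a constant C such that: for every real 2m×m matrix J with J^1 invertible such that A_j := Π_j J is Δ-regular for each j ∈ 𝒞, for every convex tree 𝒯 of dyadic cubes in ℝ^m, for every measurable c : (0,∞) → ℂ with |c| ≤ 1 almost everywhere, every u ∈ ℝ^{2m}, every 1 ≤ i ≤ m, and for every tuple (F_j)_{j∈𝒞} of compactly supported bounded measurable functions on ℝ^m such that for some j₀ ∈ 𝒞 the support of F_{j₀} ∘ A_{j₀} is disjoint from Q*_𝒯, one has |Λ_𝒯((F_j)_{j∈𝒞})| ≤ C |Q_𝒯| ∏_{j∈𝒞} sup_{Q dyadic cube with Q*_𝒯 ⊆ Q*} [F_j ∘ A_j]_{Q*}. -/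
open MeasureTheory Matrix
open scoped ENNReal NNReal BigOperators

noncomputable section

namespace SBL

/-- The set of corners of the `m`-dimensional cube: functions `{1,…,m} → {0,1}`. -/
abbrev Corner (m : ℕ) := Fin m → Fin 2

/-- Index type for `ℝ^{2m}`: coordinates `x^0_i` (left) and `x^1_i` (right). -/
abbrev Idx (m : ℕ) := Fin m ⊕ Fin m

/-- The coordinate of `ℝ^{2m}` selected by the corner `j` at position `i`. -/
def sel {m : ℕ} (j : Corner m) (i : Fin m) : Idx m :=
  if j i = 0 then Sum.inl i else Sum.inr i

/-- The projection `Π_j : ℝ^{2m} → ℝ^m`, `Π_j x = (x_1^{j(1)},…,x_m^{j(m)})`. -/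
def proj {m : ℕ} (j : Corner m) (x : Idx m → ℝ) : Fin m → ℝ := fun i => x (sel j i)

/-- The projection `Π_j` as an `m × 2m` matrix. -/
def projM {m : ℕ} (j : Corner m) : Matrix (Fin m) (Idx m) ℝ :=
  Matrix.of fun i k => if k = sel j i then 1 else 0

/-- `A_j := Π_j J`, the `m × m` matrix obtained by applying `Π_j` to (the columns of) a
`2m × m` matrix `J`, i.e. selecting rows of `J` according to the corner `j`. -/
def Amat {m : ℕ} (J : Matrix (Idx m) (Fin m) ℝ) (j : Corner m) : Matrix (Fin m) (Fin m) ℝ :=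
  Matrix.of fun i k => J (sel j i) k

/-- Euclidean norm on a finite pi type. -/
def en {ι : Type*} [Fintype ι] (x : ι → ℝ) : ℝ := Real.sqrt (∑ i, (x i) ^ 2)

/-- Operator norm of a matrix with respect to the Euclidean norms. -/
def opNorm {ι κ : Type*} [Fintype ι] [Fintype κ] [DecidableEq κ] (A : Matrix ι κ ℝ) : ℝ :=
  ‖LinearMap.toContinuousLinearMap (Matrix.toEuclideanLin A)‖

/-- `Δ`-regularity of a square matrix: `max(‖A‖, |det A|⁻¹) ≤ Δ` (in particular `det A ≠ 0`). -/
def IsReg {m : ℕ} (Δ : ℝ) (A : Matrix (Fin m) (Fin m) ℝ) : Prop :=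
  opNorm A ≤ Δ ∧ A.det ≠ 0 ∧ |A.det|⁻¹ ≤ Δ

/-- A Calderón–Zygmund kernel of order `n` in `ℝ^m`, given by its multiplier `K̂` on
`ℝ^m ∖ {0}`: it is `n` times continuously differentiable there and satisfies the symbol
estimates `‖D^k K̂(η)‖ ≤ |η|^{-k}` for all `k ≤ n`. -/
def IsCZ {m : ℕ} (n : ℕ) (Khat : (Fin m → ℝ) → ℂ) : Prop :=
  ContDiffOn ℝ n Khat {0}ᶜ ∧
  ∀ k : ℕ, k ≤ n → ∀ η : Fin m → ℝ, η ≠ 0 →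
    ‖iteratedFDerivWithin ℝ k Khat {0}ᶜ η‖ ≤ (en η) ^ (-(k : ℝ))

/-- Fourier transform of a (nice) function on `ℝ^{2m}`. -/
def fourierT {m : ℕ} (φ : (Idx m → ℝ) → ℝ) (ξ : Idx m → ℝ) : ℂ :=
  ∫ x : Idx m → ℝ, Complex.exp (-2 * Real.pi * Complex.I * (∑ k, x k * ξ k)) * (φ x : ℂ)

/-- The principal value `p.v. ∫_{ℝ^{2m}} (∏_j F_j(Π_j x)) K(Πx) dx`, defined as
`∫_{ℝ^m} φ̂(−Π^T η) K̂(η) dη` with `φ = ∏_j F_j ∘ Π_j`. -/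
def pv {m : ℕ} (P : Matrix (Fin m) (Idx m) ℝ) (Khat : (Fin m → ℝ) → ℂ)
    (F : Corner m → (Fin m → ℝ) → ℝ) : ℂ :=
  ∫ η : Fin m → ℝ, fourierT (fun x => ∏ j, F j (proj j x)) (-(P.transpose.mulVec η)) * Khat η

/-- Upper `m×m` block `J^0` of a `2m×m` matrix. -/
def Jb0 {m : ℕ} (J : Matrix (Idx m) (Fin m) ℝ) : Matrix (Fin m) (Fin m) ℝ :=
  J.submatrix Sum.inl id

/-- Lower `m×m` block `J^1` of a `2m×m` matrix. -/
def Jb1 {m : ℕ} (J : Matrix (Idx m) (Fin m) ℝ) : Matrix (Fin m) (Fin m) ℝ :=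
  J.submatrix Sum.inr id

/-- `Π^J := (I, −J^0 (J^1)⁻¹)`. -/
def PiJ {m : ℕ} (J : Matrix (Idx m) (Fin m) ℝ) : Matrix (Fin m) (Idx m) ℝ :=
  Matrix.fromCols 1 (-(Jb0 J * (Jb1 J)⁻¹))

/-- The dyadic cube with parameters `Q = (k, n)`: `∏_i [2^k n_i, 2^k (n_i+1))`. -/
def dC {m : ℕ} (Q : ℤ × (Fin m → ℤ)) : Set (Fin m → ℝ) :=
  {x | ∀ i, (2:ℝ)^Q.1 * (Q.2 i : ℝ) ≤ x i ∧ x i < (2:ℝ)^Q.1 * ((Q.2 i : ℝ) + 1)}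

/-- `Q*`: the cube with the same center as `Q` and three times the side length. -/
def dCstar {m : ℕ} (Q : ℤ × (Fin m → ℤ)) : Set (Fin m → ℝ) :=
  {x | ∀ i, (2:ℝ)^Q.1 * ((Q.2 i : ℝ) - 1) ≤ x i ∧ x i < (2:ℝ)^Q.1 * ((Q.2 i : ℝ) + 2)}

/-- A (1/2-)sparse collection of dyadic cubes. -/
def IsSparse {m : ℕ} (S : Set (ℤ × (Fin m → ℤ))) : Prop :=
  ∀ Q ∈ S,
    (∑' Q' : {q : ℤ × (Fin m → ℤ) // q ∈ S ∧ dC q ⊆ dC Q}, volume (dC Q'.val)) ≤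
      2 * volume (dC Q)

/-- The average `[F]_S := (|S|⁻¹ ∫_S |F|^{2^{m-1}})^{2^{1-m}}`. -/
def avg {m : ℕ} (S : Set (Fin m → ℝ)) (F : (Fin m → ℝ) → ℝ) : ℝ :=
  (((volume S).toReal)⁻¹ * ∫ x in S, |F x| ^ (2^(m-1) : ℕ)) ^ ((2:ℝ) ^ ((1:ℤ) - (m:ℤ)))

/-- The closed axis-parallel box `∏_i [a_i, b_i]`. -/
def box {m : ℕ} (a b : Fin m → ℝ) : Set (Fin m → ℝ) := {x | ∀ i, a i ≤ x i ∧ x i ≤ b i}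

/-- Reciprocal eccentricity `ε_R = (min_i |I_i|)/(max_i |I_i|)` of the box `∏_i [a_i,b_i]`. -/
def ecc {m : ℕ} (a b : Fin m → ℝ) : ℝ := (⨅ i, (b i - a i)) / (⨆ i, (b i - a i))

/-- Modified strong maximal function evaluated on a set `S`:
`sup { (ε_R^α)^{2^{1-m}} [F]_R : R ∈ ℛ, S ⊆ R }` (as an extended real). -/
def Mal {m : ℕ} (α : ℝ) (F : (Fin m → ℝ) → ℝ) (S : Set (Fin m → ℝ)) : ℝ≥0∞ :=
  ⨆ (a : Fin m → ℝ) (b : Fin m → ℝ) (_ : ∀ i, a i < b i) (_ : S ⊆ box a b),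
    ENNReal.ofReal ((ecc a b ^ α) ^ ((2:ℝ) ^ ((1:ℤ) - (m:ℤ))) * avg (box a b) F)

/-- `M_α(F)(A𝒯) := sup_{Q ∈ 𝒯} M_α(F)(AQ)`. -/
def MalTree {m : ℕ} (α : ℝ) (F : (Fin m → ℝ) → ℝ) (A : Matrix (Fin m) (Fin m) ℝ)
    (T : Set (ℤ × (Fin m → ℤ))) : ℝ≥0∞ :=
  ⨆ Q ∈ T, Mal α F (A.mulVec '' dC Q)

/-- A convex tree of dyadic cubes with top cube `Qt`. -/
def ConvexTree {m : ℕ} (T : Set (ℤ × (Fin m → ℤ))) (Qt : ℤ × (Fin m → ℤ)) : Prop :=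
  Qt ∈ T ∧ (∀ Q ∈ T, dC Q ⊆ dC Qt) ∧
  ∀ Q ∈ T, ∀ Q' : ℤ × (Fin m → ℤ), dC Q ⊆ dC Q' → dC Q' ⊆ dC Qt → Q' ∈ T

/-- The Gaussian `g(x) = e^{−π|x|²}` on `ℝ^{2m}`. -/
def gss {m : ℕ} (x : Idx m → ℝ) : ℝ := Real.exp (-Real.pi * ∑ k, (x k) ^ 2)

/-- The mixed partial derivative `∂^0_i ∂^1_i g`. -/
def ddg {m : ℕ} (i : Fin m) (x : Idx m → ℝ) : ℝ :=
  fderiv ℝ (fun y : Idx m → ℝ => fderiv ℝ gss y (Pi.single (Sum.inl i) (1:ℝ))) x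
    (Pi.single (Sum.inr i) (1:ℝ))

/-- Isotropic `L¹` dilation on `ℝ^{2m}`: `φ_t(x) = t^{-2m} φ(t⁻¹ x)`. -/
def dil {m : ℕ} (t : ℝ) (φ : (Idx m → ℝ) → ℝ) (x : Idx m → ℝ) : ℝ :=
  (t ^ (2*m))⁻¹ * φ (t⁻¹ • x)

/-- Matrix dilation: `φ_D(x) = (det D)⁻¹ φ(D⁻¹ x)`. -/
def dilM {m : ℕ} (D : Matrix (Idx m) (Idx m) ℝ) (φ : (Idx m → ℝ) → ℝ) (x : Idx m → ℝ) : ℝ :=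
  (D.det)⁻¹ * φ (D⁻¹.mulVec x)

/-- The region `Ω_𝒯 = ∪_{Q∈𝒯} Q × (ℓ(Q)/2, ℓ(Q))` in the upper half space. -/
def Omega {m : ℕ} (T : Set (ℤ × (Fin m → ℤ))) : Set ((Fin m → ℝ) × ℝ) :=
  ⋃ Q ∈ T, (dC Q) ×ˢ Set.Ioo ((2:ℝ)^Q.1 / 2) ((2:ℝ)^Q.1)

/-- The localized form `Λ_𝒯((F_j)_j)`. -/
def LambdaT {m : ℕ} (J : Matrix (Idx m) (Fin m) ℝ) (T : Set (ℤ × (Fin m → ℤ)))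
    (c : ℝ → ℂ) (u : Idx m → ℝ) (i : Fin m) (F : Corner m → (Fin m → ℝ) → ℝ) : ℂ :=
  ∫ z in Omega T, c z.2 * Complex.ofReal ((1 + en u ^ (4*m))⁻¹ * (z.2)⁻¹ *
    ∫ x : Idx m → ℝ, (∏ j, F j (proj j x)) * dil z.2 (ddg i) (x - J.mulVec z.1 + z.2 • u))

/-- `T_k := ∪ {Q ∈ 𝒯 : ℓ(Q) = 2^k}`. -/
def Tkset {m : ℕ} (T : Set (ℤ × (Fin m → ℤ))) (k : ℤ) : Set (Fin m → ℝ) :=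
  ⋃ Q ∈ {q ∈ T | q.1 = k}, dC Q

/-- The form `Λ̃_𝒯((F_j)_j)` with localization in the `x` variables. -/
def LambdaTilde {m : ℕ} (J : Matrix (Idx m) (Fin m) ℝ) (T : Set (ℤ × (Fin m → ℤ)))
    (c : ℝ → ℂ) (u : Idx m → ℝ) (i : Fin m) (F : Corner m → (Fin m → ℝ) → ℝ) : ℂ :=
  ∑' k : ℤ, ∫ t in Set.Ioc ((2:ℝ)^(k-1)) ((2:ℝ)^k),
    c t * Complex.ofReal ((1 + en u ^ (4*m))⁻¹ * t⁻¹ *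
      ∫ p : Fin m → ℝ, ∫ x : Idx m → ℝ,
        (∏ j, Set.indicator ((Amat J j).mulVec '' Tkset T k) (F j) (proj j x)) *
          dil t (ddg i) (x - J.mulVec p + t • u))

/-- The form `Λ(𝒯,J,K)((F_j)_j)` from the induction proposition. -/
def LambdaK {m : ℕ} (J : Matrix (Idx m) (Fin m) ℝ) (T : Set (ℤ × (Fin m → ℤ)))
    (K : ℝ → (Idx m → ℝ) → ℂ) (F : Corner m → (Fin m → ℝ) → ℝ) : ℂ :=
  ∑' k : ℤ, ∫ x : Idx m → ℝ,
    Complex.ofReal (∏ j, Set.indicator ((Amat J j).mulVec '' Tkset T k) (F j) (proj j x)) *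
      ∫ t in Set.Ioc ((2:ℝ)^(k-1)) ((2:ℝ)^k), K t x * (t : ℂ)⁻¹

/-- The reflected corner `i∗j`, differing from `j` exactly at position `i`. -/
def istar {m : ℕ} (i : Fin m) (j : Corner m) : Corner m :=
  fun k => if k = i then 1 - j i else j k

/-- The diagonal matrix `Θ̃` with entry 0 at positions `i ≤ l` and 1 at positions `i > l`
(1-based), i.e. 0 for `i < l` and 1 otherwise in 0-based indexing. -/
def Th {m : ℕ} (l : ℕ) : Matrix (Fin m) (Fin m) ℝ :=
  Matrix.diagonal fun i => if (i : ℕ) < l then 0 else 1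

/-- The block diagonal matrix `Θ = diag(Θ̃, Θ̃)`. -/
def ThB {m : ℕ} (l : ℕ) : Matrix (Idx m) (Idx m) ℝ :=
  Matrix.diagonal (Sum.elim (fun i : Fin m => if (i:ℕ) < l then (0:ℝ) else 1)
    (fun i : Fin m => if (i:ℕ) < l then (0:ℝ) else 1))

end SBL

namespace SBL

/-- Finner's inequality for marginals: if every coordinate is covered with total weight one by the
sets `S j`, then the marginals of `∏ j, f j ^ p j` are controlled by those of the `f j`. -/
theorem lmarginal_prod_rpow_le {ι κ : Type*} [DecidableEq ι] [Fintype κ] {X : ι → Type*}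
    [∀ i, MeasurableSpace (X i)] (μ : ∀ i, Measure (X i)) [∀ i, SigmaFinite (μ i)]
    (S : κ → Finset ι) (p : κ → ℝ) (hp : ∀ j, 0 ≤ p j)
    (hsum : ∀ i, ∑ j with i ∈ S j, p j = 1) (f : κ → (∀ i, X i) → ℝ≥0∞)
    (hf : ∀ j, Measurable (f j))
    (hdep : ∀ j i, i ∉ S j → ∀ x y, f j (Function.update x i y) = f j x)
    (s : Finset ι) (x : ∀ i, X i) :
    (∫⋯∫⁻_s, (fun y => ∏ j, f j y ^ p j) ∂μ) x ≤ ∏ j, ((∫⋯∫⁻_(s ∩ S j), f j ∂μ) x) ^ p j := by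
  have hmeas : Measurable fun y => ∏ j, f j y ^ p j :=
    Finset.measurable_prod _ fun j _ => (hf j).pow_const _
  induction s using Finset.induction generalizing x with
  | empty => simp
  | insert k s hk ih =>
    rw [lmarginal_insert _ hmeas hk]
    calc ∫⁻ y, (∫⋯∫⁻_s, (fun y => ∏ j, f j y ^ p j) ∂μ) (Function.update x k y) ∂μ k
        ≤ ∫⁻ y, ∏ j, ((∫⋯∫⁻_(s ∩ S j), f j ∂μ) (Function.update x k y)) ^ p j ∂μ k :=
          lintegral_mono fun y => ih _
      _ = ∫⁻ y, (∏ j with k ∈ S j, ((∫⋯∫⁻_(s ∩ S j), f j ∂μ) (Function.update x k y)) ^ p j) *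
            ∏ j with k ∉ S j, ((∫⋯∫⁻_(s ∩ S j), f j ∂μ) x) ^ p j ∂μ k := by
          refine lintegral_congr fun y => ?_
          rw [← Finset.prod_filter_mul_prod_filter_not Finset.univ (fun j => k ∈ S j)]
          congr 1
          refine Finset.prod_congr rfl fun j hj => ?_
          have hkj : k ∉ S j := (Finset.mem_filter.1 hj).2
          have hcomp : f j ∘ (Function.update · k y) = f j := funext fun z => hdep j k hkj z y
          rw [lmarginal_update_of_notMem (hf j) (by simp [hkj]), hcomp]
      _ = (∫⁻ y, ∏ j with k ∈ S j, ((∫⋯∫⁻_(s ∩ S j), f j ∂μ) (Function.update x k y)) ^ p j ∂μ k) *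
            ∏ j with k ∉ S j, ((∫⋯∫⁻_(s ∩ S j), f j ∂μ) x) ^ p j := by
          refine lintegral_mul_const _ (Finset.measurable_prod _ fun j _ => ?_)
          exact (((hf j).lmarginal μ).comp (measurable_update x)).pow_const _
      _ ≤ (∏ j with k ∈ S j,
            (∫⁻ y, (∫⋯∫⁻_(s ∩ S j), f j ∂μ) (Function.update x k y) ∂μ k) ^ p j) *
            ∏ j with k ∉ S j, ((∫⋯∫⁻_(s ∩ S j), f j ∂μ) x) ^ p j := by
          gcongr
          refine ENNReal.lintegral_prod_norm_pow_le _ (fun j _ => ?_) (hsum k) fun j _ => hp j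
          exact (((hf j).lmarginal μ).comp (measurable_update x)).aemeasurable
      _ = ∏ j, ((∫⋯∫⁻_(insert k s ∩ S j), f j ∂μ) x) ^ p j := by
          rw [← Finset.prod_filter_mul_prod_filter_not Finset.univ (fun j => k ∈ S j)
            fun j => ((∫⋯∫⁻_(insert k s ∩ S j), f j ∂μ) x) ^ p j]
          congr 1
          · refine Finset.prod_congr rfl fun j hj => ?_
            have hkj : k ∈ S j := (Finset.mem_filter.1 hj).2
            rw [Finset.insert_inter_of_mem hkj, lmarginal_insert _ (hf j) (by simp [hk])]
          · refine Finset.prod_congr rfl fun j hj => ?_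
            have hkj : k ∉ S j := (Finset.mem_filter.1 hj).2
            rw [Finset.insert_inter_of_notMem hkj]

lemma sel_injective {m : ℕ} (j : Corner m) : Function.Injective (sel j) := by
  intro a b h
  unfold sel at h
  split_ifs at h <;> simpa using h

lemma card_corner_eq {m : ℕ} (i : Fin m) (a : Fin 2) :
    (Finset.univ.filter fun j : Corner m => j i = a).card = 2 ^ (m - 1) := by
  have h : (Finset.univ.filter fun j : Corner m => j i = a) =
      Fintype.piFinset fun l : Fin m => if l = i then {a} else Finset.univ := by
    ext j
    simp only [Finset.mem_filter, Finset.mem_univ, true_and, Fintype.mem_piFinset]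
    constructor
    · intro h l
      split_ifs with hl
      · subst hl; simpa using h
      · simp
    · intro h
      simpa using h i
  rw [h, Fintype.card_piFinset, ← Finset.mul_prod_erase Finset.univ _ (Finset.mem_univ i)]
  rw [Finset.prod_congr rfl (g := fun _ => 2)]
  · simp
  · intro l hl
    simp [Finset.ne_of_mem_erase hl]

lemma card_corner_mem_sel {m : ℕ} (k : Idx m) :
    (Finset.univ.filter fun j : Corner m => k ∈ Finset.univ.image (sel j)).card = 2 ^ (m - 1) := by
  rcases k with i | i
  · rw [← card_corner_eq i 0]
    congr 1
    ext j
    simp only [Finset.mem_filter, Finset.mem_univ, true_and, Finset.mem_image, sel]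
    constructor
    · rintro ⟨l, hl⟩
      split_ifs at hl with h
      · simp_all
    · intro h; exact ⟨i, by simp [h]⟩
  · rw [← card_corner_eq i 1]
    congr 1
    ext j
    simp only [Finset.mem_filter, Finset.mem_univ, true_and, Finset.mem_image, sel]
    constructor
    · rintro ⟨l, hl⟩
      split_ifs at hl with h
      · have : l = i := by simpa using hl
        subst this; omega
    · intro h; exact ⟨i, by simp [h]⟩

/-- The Loomis–Whitney type inequality for the corner projections `Π_j`. -/
theorem lintegral_prod_proj_le {m : ℕ} (G : Corner m → (Fin m → ℝ) → ℝ≥0∞)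
    (hG : ∀ j, Measurable (G j)) :
    ∫⁻ x : Idx m → ℝ, ∏ j, G j (proj j x) ≤
      ∏ j, (∫⁻ z, G j z ^ (2 ^ (m - 1) : ℕ)) ^ (((2 ^ (m - 1) : ℕ) : ℝ)⁻¹) := by
  set P : ℕ := 2 ^ (m - 1) with hP
  have hP0 : P ≠ 0 := by positivity
  have hproj : ∀ j : Corner m, Measurable (proj j) := fun j =>
    measurable_pi_iff.2 fun i => measurable_pi_apply _
  have key := lmarginal_prod_rpow_le (fun _ : Idx m => (volume : Measure ℝ))
    (fun j : Corner m => Finset.univ.image (sel j)) (fun _ => (P : ℝ)⁻¹) (fun _ => by positivity)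
    (fun k => by
      rw [Finset.sum_const, card_corner_mem_sel, ← hP, nsmul_eq_mul]
      exact mul_inv_cancel₀ (by exact_mod_cast hP0))
    (fun j x => G j (proj j x) ^ P) (fun j => ((hG j).comp (hproj j)).pow_const _)
    (fun j k hk x y => by
      have : proj j (Function.update x k y) = proj j x := by
        funext i
        refine Function.update_of_ne ?_ _ _
        rintro rfl
        exact hk (Finset.mem_image_of_mem _ (Finset.mem_univ i))
      simp only [this])
    Finset.univ 0
  simp only [lmarginal_univ, Finset.univ_inter] at key
  refine le_trans (le_of_eq ?_) (key.trans (le_of_eq ?_))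
  · refine lintegral_congr fun x => Finset.prod_congr rfl fun j _ => ?_
    rw [← ENNReal.rpow_natCast_mul, mul_inv_cancel₀ (by exact_mod_cast hP0), ENNReal.rpow_one]
  · refine Finset.prod_congr rfl fun j _ => ?_
    congr 1
    have := lmarginal_image (μ := fun _ : Idx m => (volume : Measure ℝ)) (sel_injective j)
      Finset.univ (f := fun z => G j z ^ P) ((hG j).pow_const _) 0
    rw [lmarginal_univ] at this
    exact this

lemma abs_apply_le_opNorm {m : ℕ} (A : Matrix (Fin m) (Fin m) ℝ) (i k : Fin m) :
    |A i k| ≤ opNorm A := by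
  have h1 := (LinearMap.toContinuousLinearMap (Matrix.toEuclideanLin A)).le_opNorm
    (EuclideanSpace.single k (1 : ℝ))
  have h2 := PiLp.norm_apply_le
    (LinearMap.toContinuousLinearMap (Matrix.toEuclideanLin A) (EuclideanSpace.single k (1 : ℝ))) i
  have h3 : (LinearMap.toContinuousLinearMap (Matrix.toEuclideanLin A)
      (EuclideanSpace.single k (1 : ℝ))) i = A i k := by
    simp [Matrix.toLpLin_apply]
  rw [h3, Real.norm_eq_abs] at h2
  refine h2.trans (h1.trans ?_)
  simp [opNorm]

/-- A bound for the determinant of a `Δ`-regular matrix. -/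
def detBound (m : ℕ) (Δ : ℝ) : ℝ := (m.factorial : ℝ) * Δ ^ m

lemma abs_det_le {m : ℕ} {A : Matrix (Fin m) (Fin m) ℝ} {B : ℝ} (h : ∀ i k, |A i k| ≤ B) :
    |A.det| ≤ detBound m B := by
  have := Matrix.det_le (A := A) (abv := AbsoluteValue.abs) (x := B) h
  simpa [detBound] using this

/-- A bound for the inverse, in the sup norm, of a `Δ`-regular matrix. -/
def invBound (m : ℕ) (Δ : ℝ) : ℝ := m * (Δ * detBound m Δ)

lemma norm_le_invBound_mul {m : ℕ} {Δ : ℝ} (hΔ : 1 < Δ) {A : Matrix (Fin m) (Fin m) ℝ}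
    (hA : IsReg Δ A) (v : Fin m → ℝ) : ‖v‖ ≤ invBound m Δ * ‖A *ᵥ v‖ := by
  obtain ⟨hop, hdet, hinv⟩ := hA
  have hent : ∀ i k, |A i k| ≤ Δ := fun i k => (abs_apply_le_opNorm A i k).trans hop
  have hD : 0 ≤ detBound m Δ := by unfold detBound; positivity
  have hadj : ∀ i k, |A.adjugate i k| ≤ detBound m Δ := by
    intro i k
    rw [Matrix.adjugate_apply]
    refine abs_det_le fun a b => ?_
    rw [Matrix.updateRow_apply]
    split_ifs
    · by_cases hb : b = i
      · subst hb; simpa using hΔ.le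
      · rw [Pi.single_eq_of_ne hb]; simp; linarith
    · exact hent a b
  have hv : v = A⁻¹ *ᵥ (A *ᵥ v) := by
    rw [Matrix.mulVec_mulVec, Matrix.nonsing_inv_mul _ (isUnit_iff_ne_zero.2 hdet),
      Matrix.one_mulVec]
  have hInv : ∀ i k, |A⁻¹ i k| ≤ Δ * detBound m Δ := by
    intro i k
    rw [Matrix.inv_def, Ring.inverse_eq_inv', Matrix.smul_apply, smul_eq_mul, abs_mul, abs_inv]
    exact mul_le_mul hinv (hadj i k) (abs_nonneg _) (by linarith)
  have hpos : 0 ≤ invBound m Δ := by unfold invBound; positivity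
  rw [pi_norm_le_iff_of_nonneg (by positivity)]
  intro i
  conv_lhs => rw [hv]
  rw [Real.norm_eq_abs, Matrix.mulVec, dotProduct]
  calc |∑ k, A⁻¹ i k * (A *ᵥ v) k| ≤ ∑ k, |A⁻¹ i k * (A *ᵥ v) k| := Finset.abs_sum_le_sum_abs _ _
    _ ≤ ∑ _k : Fin m, Δ * detBound m Δ * ‖A *ᵥ v‖ := by
        refine Finset.sum_le_sum fun k _ => ?_
        rw [abs_mul]
        exact mul_le_mul (hInv i k) (norm_le_pi_norm (A *ᵥ v) k) (abs_nonneg _) (by positivity)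
    _ = invBound m Δ * ‖A *ᵥ v‖ := by simp [invBound]; ring

lemma proj_sub_mulVec {m : ℕ} (J : Matrix (Idx m) (Fin m) ℝ) (j : Corner m) (x : Idx m → ℝ)
    (p : Fin m → ℝ) : proj j (x - J *ᵥ p) = proj j x - Amat J j *ᵥ p := by
  funext i; rfl

lemma norm_proj_le {m : ℕ} (j : Corner m) (x : Idx m → ℝ) : ‖proj j x‖ ≤ ‖x‖ :=
  (pi_norm_le_iff_of_nonneg (norm_nonneg _)).2 fun i => norm_le_pi_norm x (sel j i)

/-- If `Π_j x = A_j y`, then `y` is as close to `p` as `x` is to `J p`. -/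
lemma norm_sub_le_of_proj_eq {m : ℕ} {Δ : ℝ} (hΔ : 1 < Δ) {J : Matrix (Idx m) (Fin m) ℝ}
    {j : Corner m} (hJ : IsReg Δ (Amat J j)) {x : Idx m → ℝ} {y p : Fin m → ℝ}
    (hxy : proj j x = Amat J j *ᵥ y) : ‖y - p‖ ≤ invBound m Δ * ‖x - J *ᵥ p‖ := by
  have hpos : 0 ≤ invBound m Δ := by unfold invBound detBound; positivity
  refine (norm_le_invBound_mul hΔ hJ (y - p)).trans ?_
  have h : Amat J j *ᵥ (y - p) = proj j (x - J *ᵥ p) := by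
    rw [proj_sub_mulVec, hxy, Matrix.mulVec_sub]
  rw [h]
  exact mul_le_mul_of_nonneg_left (norm_proj_le _ _) hpos

lemma dC_eq_pi {m : ℕ} (Q : ℤ × (Fin m → ℤ)) :
    dC Q = Set.univ.pi fun i => Set.Ico ((2:ℝ)^Q.1 * (Q.2 i : ℝ)) ((2:ℝ)^Q.1 * ((Q.2 i : ℝ) + 1)) := by
  ext x; simp [dC]

lemma dCstar_eq_pi {m : ℕ} (Q : ℤ × (Fin m → ℤ)) :
    dCstar Q = Set.univ.pi fun i =>
      Set.Ico ((2:ℝ)^Q.1 * ((Q.2 i : ℝ) - 1)) ((2:ℝ)^Q.1 * ((Q.2 i : ℝ) + 2)) := by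
  ext x; simp [dCstar]

lemma measurableSet_dC {m : ℕ} (Q : ℤ × (Fin m → ℤ)) : MeasurableSet (dC Q) := by
  rw [dC_eq_pi]
  exact MeasurableSet.univ_pi fun i => measurableSet_Ico

lemma measurableSet_dCstar {m : ℕ} (Q : ℤ × (Fin m → ℤ)) : MeasurableSet (dCstar Q) := by
  rw [dCstar_eq_pi]
  exact MeasurableSet.univ_pi fun i => measurableSet_Ico

lemma volume_dC {m : ℕ} (Q : ℤ × (Fin m → ℤ)) :
    volume (dC Q) = ENNReal.ofReal ((2:ℝ)^Q.1) ^ m := by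
  rw [dC_eq_pi, volume_pi_pi]
  simp only [Real.volume_Ico]
  rw [Finset.prod_congr rfl (g := fun _ => ENNReal.ofReal ((2:ℝ)^Q.1))]
  · simp
  · intro i _
    congr 1
    ring

lemma volume_dCstar {m : ℕ} (Q : ℤ × (Fin m → ℤ)) :
    volume (dCstar Q) = ENNReal.ofReal (3 * (2:ℝ)^Q.1) ^ m := by
  rw [dCstar_eq_pi, volume_pi_pi]
  simp only [Real.volume_Ico]
  rw [Finset.prod_congr rfl (g := fun _ => ENNReal.ofReal (3 * (2:ℝ)^Q.1))]
  · simp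
  · intro i _
    congr 1
    ring

lemma side_le_of_dC_subset {m : ℕ} (hm : m ≠ 0) {Q Q' : ℤ × (Fin m → ℤ)} (h : dC Q ⊆ dC Q') :
    (2:ℝ)^Q.1 ≤ (2:ℝ)^Q'.1 := by
  have h1 := measure_mono (μ := volume) h
  rw [volume_dC, volume_dC, ENNReal.pow_le_pow_left_iff hm] at h1
  exact (ENNReal.ofReal_le_ofReal_iff (by positivity)).1 h1

/-- The `N`-th dyadic ancestor of a dyadic cube. -/
def ancestor {m : ℕ} (Q : ℤ × (Fin m → ℤ)) (N : ℕ) : ℤ × (Fin m → ℤ) :=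
  (Q.1 + N, fun i => Q.2 i / 2 ^ N)

lemma ancestor_side {m : ℕ} (Q : ℤ × (Fin m → ℤ)) (N : ℕ) :
    (2:ℝ) ^ (ancestor Q N).1 = 2 ^ N * (2:ℝ) ^ Q.1 := by
  simp only [ancestor]
  rw [zpow_add₀ two_ne_zero, zpow_natCast, mul_comm]

lemma ancestor_le {m : ℕ} (Q : ℤ × (Fin m → ℤ)) (N : ℕ) (i : Fin m) :
    (2:ℝ) ^ N * ((ancestor Q N).2 i : ℝ) ≤ Q.2 i := by
  have h : (2:ℤ) ^ N * (Q.2 i / 2 ^ N) ≤ Q.2 i := Int.mul_ediv_self_le (by positivity)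
  exact_mod_cast h

lemma le_ancestor {m : ℕ} (Q : ℤ × (Fin m → ℤ)) (N : ℕ) (i : Fin m) :
    (Q.2 i : ℝ) + 1 ≤ (2:ℝ) ^ N * ((ancestor Q N).2 i + 1 : ℝ) := by
  have h : Q.2 i < (2:ℤ) ^ N * (Q.2 i / 2 ^ N) + 2 ^ N :=
    Int.lt_mul_ediv_self_add (by positivity)
  have h' : Q.2 i + 1 ≤ (2:ℤ) ^ N * (Q.2 i / 2 ^ N + 1) := by linarith
  exact_mod_cast h'

lemma dCstar_subset_ancestor {m : ℕ} (Q : ℤ × (Fin m → ℤ)) (N : ℕ) :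
    dCstar Q ⊆ dCstar (ancestor Q N) := by
  intro x hx i
  obtain ⟨h1, h2⟩ := hx i
  have hL : (0:ℝ) < 2 ^ Q.1 := by positivity
  have hN : (1:ℝ) ≤ 2 ^ N := one_le_pow₀ one_le_two
  rw [ancestor_side]
  have h3 := ancestor_le Q N i
  have h4 := le_ancestor Q N i
  constructor
  · refine le_trans ?_ h1
    rw [mul_comm ((2:ℝ)^N), mul_assoc]
    exact mul_le_mul_of_nonneg_left (by linarith) hL.le
  · refine h2.trans_le ?_
    rw [mul_comm ((2:ℝ)^N), mul_assoc]
    exact mul_le_mul_of_nonneg_left (by linarith) hL.le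

lemma mem_dCstar_ancestor {m : ℕ} {Q : ℤ × (Fin m → ℤ)} {N : ℕ} {p y : Fin m → ℝ}
    (hp : p ∈ dC Q) (h : ‖y - p‖ ≤ 2 ^ N * (2:ℝ) ^ Q.1) : y ∈ dCstar (ancestor Q N) := by
  intro i
  obtain ⟨h1, h2⟩ := hp i
  have hL : (0:ℝ) < 2 ^ Q.1 := by positivity
  have h3 := mul_le_mul_of_nonneg_left (ancestor_le Q N i) hL.le
  have h4 := mul_le_mul_of_nonneg_left (le_ancestor Q N i) hL.le
  have h5 := abs_le.1 ((norm_le_pi_norm (y - p) i).trans h)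
  simp only [Pi.sub_apply] at h5
  rw [ancestor_side]
  constructor <;> nlinarith

lemma side_le_norm_sub {m : ℕ} {Q : ℤ × (Fin m → ℤ)} {p y : Fin m → ℝ}
    (hp : p ∈ dC Q) (hy : y ∉ dCstar Q) : (2:ℝ) ^ Q.1 ≤ ‖y - p‖ := by
  by_contra! h
  refine hy ?_
  have h0 := mem_dCstar_ancestor (N := 0) (y := y) hp (by simpa using h.le)
  simpa [ancestor] using h0

lemma hasFDerivAt_gss {m : ℕ} (x : Idx m → ℝ) :
    HasFDerivAt (gss (m := m)) (gss x • ((-Real.pi) • ∑ k, (2 * x k) •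
      (ContinuousLinearMap.proj k : (Idx m → ℝ) →L[ℝ] ℝ))) x := by
  have h : HasFDerivAt (fun y : Idx m → ℝ => ∑ k, y k ^ 2)
      (∑ k, (2 * x k) • (ContinuousLinearMap.proj k : (Idx m → ℝ) →L[ℝ] ℝ)) x := by
    refine HasFDerivAt.fun_sum fun k _ => ?_
    have := ((ContinuousLinearMap.proj k : (Idx m → ℝ) →L[ℝ] ℝ).hasFDerivAt (x := x)).pow 2
    simpa using this
  exact (h.const_mul (-Real.pi)).exp

lemma fderiv_gss_single {m : ℕ} (x : Idx m → ℝ) (a : Idx m) :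
    fderiv ℝ gss x (Pi.single a (1:ℝ)) = gss x * (-Real.pi * (2 * x a)) := by
  rw [(hasFDerivAt_gss x).fderiv]
  simp only [_root_.smul_apply, _root_.sum_apply,
    ContinuousLinearMap.proj_apply, Pi.single_apply, smul_eq_mul, mul_ite, mul_one, mul_zero,
    Finset.sum_ite_eq', Finset.mem_univ, if_true]

lemma ddg_eq {m : ℕ} (i : Fin m) (x : Idx m → ℝ) :
    ddg i x = 4 * Real.pi ^ 2 * (x (Sum.inl i) * x (Sum.inr i)) * gss x := by
  unfold ddg
  simp only [fderiv_gss_single]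
  have h1 : HasFDerivAt (fun y : Idx m → ℝ => -Real.pi * (2 * y (Sum.inl i)))
      ((-Real.pi) • ((2:ℝ) • (ContinuousLinearMap.proj (Sum.inl i) : (Idx m → ℝ) →L[ℝ] ℝ))) x :=
    (((ContinuousLinearMap.proj (Sum.inl i) : (Idx m → ℝ) →L[ℝ] ℝ).hasFDerivAt).const_mul
      2).const_mul _
  rw [((hasFDerivAt_gss x).fun_mul h1).fderiv]
  rw [← (hasFDerivAt_gss x).fderiv]
  simp only [_root_.add_apply, _root_.smul_apply, fderiv_gss_single,
    ContinuousLinearMap.proj_apply, Pi.single_apply, smul_eq_mul, reduceCtorEq, if_false]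
  ring

/-- The constant in the polynomial decay estimate for `∂^0_i ∂^1_i g`. -/
def kerBound (m : ℕ) : ℝ := 4 * Real.pi ^ 2 * ((4 * m + 2).factorial * Real.exp 2)

lemma kerBound_nonneg (m : ℕ) : 0 ≤ kerBound m := by unfold kerBound; positivity

lemma abs_ddg_mul_le {m : ℕ} (i : Fin m) (x : Idx m → ℝ) :
    |ddg i x| * (1 + ‖x‖) ^ (4 * m) ≤ kerBound m := by
  set r := ‖x‖ with hr
  have hr0 : 0 ≤ r := norm_nonneg _
  have hx : ∀ k, |x k| ≤ r := fun k => norm_le_pi_norm x k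
  have hprod : |x (Sum.inl i) * x (Sum.inr i)| ≤ (1 + r) ^ 2 := by
    rw [abs_mul, sq]
    exact mul_le_mul ((hx _).trans (by linarith)) ((hx _).trans (by linarith)) (abs_nonneg _)
      (by linarith)
  have hsq : r ^ 2 ≤ ∑ k, x k ^ 2 := by
    obtain ⟨k, hk⟩ : ∃ k, ‖x k‖ = r := by
      have : Nonempty (Idx m) := ⟨Sum.inl i⟩
      obtain ⟨k, hk⟩ := Finite.exists_max fun k => ‖x k‖
      exact ⟨k, le_antisymm (hx k) ((pi_norm_le_iff_of_nonneg (norm_nonneg _)).2 hk)⟩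
    rw [← hk, Real.norm_eq_abs, sq_abs]
    exact Finset.single_le_sum (f := fun k => x k ^ 2) (fun k _ => sq_nonneg _) (Finset.mem_univ k)
  have hg : gss x ≤ Real.exp (1 - r) := by
    refine Real.exp_le_exp.2 ?_
    have h3 : (3:ℝ) < Real.pi := Real.pi_gt_three
    have h0 : 0 ≤ ∑ k, x k ^ 2 := Finset.sum_nonneg fun k _ => sq_nonneg _
    nlinarith [sq_nonneg (r - 1)]
  have hg0 : 0 ≤ gss x := (Real.exp_pos _).le
  have hfac : (1 + r) ^ (4 * m + 2) ≤ (4 * m + 2).factorial * Real.exp (1 + r) := by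
    have := Real.pow_div_factorial_le_exp (1 + r) (by linarith) (4 * m + 2)
    rwa [div_le_iff₀' (by positivity)] at this
  rw [ddg_eq, abs_mul, abs_mul, abs_of_nonneg hg0, abs_of_nonneg (by positivity : (0:ℝ) ≤ 4 * Real.pi ^ 2)]
  calc 4 * Real.pi ^ 2 * |x (Sum.inl i) * x (Sum.inr i)| * gss x * (1 + r) ^ (4 * m)
      ≤ 4 * Real.pi ^ 2 * (1 + r) ^ 2 * Real.exp (1 - r) * (1 + r) ^ (4 * m) := by gcongr
    _ = 4 * Real.pi ^ 2 * ((1 + r) ^ (4 * m + 2) * Real.exp (1 - r)) := by ring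
    _ ≤ 4 * Real.pi ^ 2 * (((4 * m + 2).factorial * Real.exp (1 + r)) * Real.exp (1 - r)) := by
        gcongr
    _ = kerBound m := by
        rw [mul_assoc _ (Real.exp (1 + r)), ← Real.exp_add, kerBound]
        norm_num

lemma norm_le_en {ι : Type*} [Fintype ι] (u : ι → ℝ) : ‖u‖ ≤ en u := by
  refine (pi_norm_le_iff_of_nonneg (Real.sqrt_nonneg _)).2 fun k => ?_
  rw [Real.norm_eq_abs]
  exact Real.abs_le_sqrt
    (Finset.single_le_sum (f := fun k => u k ^ 2) (fun k _ => sq_nonneg _) (Finset.mem_univ k))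

/-- Decay of the translated and dilated kernel, with polynomial loss in the translation. -/
lemma abs_dil_ddg_le {m : ℕ} (i : Fin m) {t : ℝ} (ht : 0 < t) (u w : Idx m → ℝ) (hw : 0 < ‖w‖) :
    |dil t (ddg i) (w + t • u)| ≤
      kerBound m * 2 ^ (4 * m) * (1 + en u ^ (4 * m)) * t ^ (2 * m) / ‖w‖ ^ (4 * m) := by
  have hK := kerBound_nonneg m
  set v := t⁻¹ • (w + t • u) with hv
  have hwv : w = t • (v - u) := by
    rw [hv, smul_sub, smul_inv_smul₀ ht.ne']; simp
  have h1 : ‖w‖ ≤ t * ((1 + ‖v‖) * (1 + ‖u‖)) := by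
    conv_lhs => rw [hwv, norm_smul, Real.norm_of_nonneg ht.le]
    refine mul_le_mul_of_nonneg_left ((norm_sub_le _ _).trans ?_) ht.le
    nlinarith [norm_nonneg v, norm_nonneg u]
  have h2 : (1 + ‖u‖) ^ (4 * m) ≤ 2 ^ (4 * m) * (1 + en u ^ (4 * m)) := by
    calc (1 + ‖u‖) ^ (4 * m) ≤ 2 ^ (4 * m - 1) * (1 ^ (4 * m) + ‖u‖ ^ (4 * m)) :=
          add_pow_le zero_le_one (norm_nonneg _) _
      _ ≤ 2 ^ (4 * m) * (1 + en u ^ (4 * m)) := by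
          rw [one_pow]
          have := norm_le_en u
          gcongr
          · norm_num
          · omega
  have h3 : ‖w‖ ^ (4 * m) ≤
      t ^ (4 * m) * ((1 + ‖v‖) ^ (4 * m) * (2 ^ (4 * m) * (1 + en u ^ (4 * m)))) := by
    calc ‖w‖ ^ (4 * m) ≤ (t * ((1 + ‖v‖) * (1 + ‖u‖))) ^ (4 * m) := by gcongr
      _ = t ^ (4 * m) * ((1 + ‖v‖) ^ (4 * m) * (1 + ‖u‖) ^ (4 * m)) := by rw [mul_pow, mul_pow]
      _ ≤ _ := by gcongr
  have hen : 0 ≤ en u := Real.sqrt_nonneg _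
  rw [le_div_iff₀ (by positivity), dil, abs_mul, abs_of_nonneg (by positivity)]
  calc (t ^ (2 * m))⁻¹ * |ddg i v| * ‖w‖ ^ (4 * m)
      ≤ (t ^ (2 * m))⁻¹ * |ddg i v| *
        (t ^ (4 * m) * ((1 + ‖v‖) ^ (4 * m) * (2 ^ (4 * m) * (1 + en u ^ (4 * m))))) := by gcongr
    _ = (|ddg i v| * (1 + ‖v‖) ^ (4 * m)) * (2 ^ (4 * m) * (1 + en u ^ (4 * m))) *
        ((t ^ (2 * m))⁻¹ * t ^ (4 * m)) := by ring
    _ ≤ kerBound m * (2 ^ (4 * m) * (1 + en u ^ (4 * m))) *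
        ((t ^ (2 * m))⁻¹ * t ^ (4 * m)) := by gcongr; exact abs_ddg_mul_le i v
    _ = kerBound m * 2 ^ (4 * m) * (1 + en u ^ (4 * m)) * t ^ (2 * m) := by
        have : (t ^ (2 * m))⁻¹ * t ^ (4 * m) = t ^ (2 * m) := by
          rw [inv_mul_eq_iff_eq_mul₀ (by positivity), ← pow_add]; congr 1; ring
        rw [this]; ring

lemma lintegral_comp_mulVec {m : ℕ} {A : Matrix (Fin m) (Fin m) ℝ} (hA : A.det ≠ 0)
    {h : (Fin m → ℝ) → ℝ≥0∞} (hh : Measurable h) :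
    ∫⁻ z, h z = ENNReal.ofReal |A.det| * ∫⁻ y, h (A *ᵥ y) := by
  have hmeas : Measurable (Matrix.toLin' A) :=
    (LinearMap.continuous_of_finiteDimensional _).measurable
  have h1 : ∫⁻ y, h (A *ᵥ y) = ENNReal.ofReal |A.det⁻¹| * ∫⁻ z, h z := by
    have := lintegral_map (μ := volume) hh hmeas
    rw [Real.map_matrix_volume_pi_eq_smul_volume_pi hA, lintegral_smul_measure] at this
    simpa using this.symm
  rw [h1, ← mul_assoc, ← ENNReal.ofReal_mul (abs_nonneg _), ← abs_mul, mul_inv_cancel₀ hA]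
  simp

lemma two_zpow_one_sub {m : ℕ} (hm : 1 ≤ m) :
    (2:ℝ) ^ ((1:ℤ) - (m:ℤ)) = (((2 ^ (m - 1) : ℕ) : ℝ))⁻¹ := by
  have : (1:ℤ) - m = -((m - 1 : ℕ) : ℤ) := by omega
  rw [this, _root_.zpow_neg, zpow_natCast]
  push_cast
  rfl

/-- The `L^{2^{m-1}}` norm of `F` on `A Q*` in terms of the average of `F ∘ A` on `Q*`. -/
lemma lintegral_indicator_pow_le_avg {m : ℕ} (hm : 1 ≤ m) {A : Matrix (Fin m) (Fin m) ℝ}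
    (hA : A.det ≠ 0) {D : ℝ} (hD : |A.det| ≤ D) {F : (Fin m → ℝ) → ℝ} (hF : Measurable F) {M : ℝ}
    (hM : ∀ x, |F x| ≤ M) (Q : ℤ × (Fin m → ℤ)) :
    (∫⁻ z, (Set.indicator ((A⁻¹ *ᵥ ·) ⁻¹' dCstar Q) (fun z => ‖F z‖ₑ) z) ^ (2 ^ (m - 1) : ℕ)) ^
        (((2 ^ (m - 1) : ℕ) : ℝ)⁻¹) ≤
      (ENNReal.ofReal D * volume (dCstar Q)) ^ (((2 ^ (m - 1) : ℕ) : ℝ)⁻¹) *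
        ENNReal.ofReal (avg (dCstar Q) fun x => F (A *ᵥ x)) := by
  set P : ℕ := 2 ^ (m - 1) with hP
  have hP0 : P ≠ 0 := by positivity
  have hmulVec : ∀ B : Matrix (Fin m) (Fin m) ℝ, Measurable (B *ᵥ ·) := fun B =>
    (LinearMap.continuous_of_finiteDimensional (Matrix.toLin' B)).measurable
  have hS := measurableSet_dCstar Q
  have hvol : volume (dCstar Q) ≠ ∞ := by rw [volume_dCstar]; exact ENNReal.pow_ne_top ENNReal.ofReal_ne_top
  have hvol0 : volume (dCstar Q) ≠ 0 := by
    rw [volume_dCstar]; exact pow_ne_zero _ (by simp; positivity)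
  rw [avg, two_zpow_one_sub hm, ← hP]
  have hinner : IntegrableOn (fun x => |F (A *ᵥ x)| ^ P) (dCstar Q) := by
    refine Measure.integrableOn_of_bounded (M := M ^ P) hvol ?_ ?_
    · exact ((hF.comp (hmulVec A)).abs.pow_const P).aestronglyMeasurable
    · refine Filter.Eventually.of_forall fun x => ?_
      rw [Real.norm_eq_abs, abs_pow, abs_abs]
      exact pow_le_pow_left₀ (abs_nonneg _) (hM _) _
  have hI : ENNReal.ofReal (∫ x in dCstar Q, |F (A *ᵥ x)| ^ P) =
      ∫⁻ x in dCstar Q, ‖F (A *ᵥ x)‖ₑ ^ P := by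
    rw [ofReal_integral_eq_lintegral_ofReal hinner
      (Filter.Eventually.of_forall fun x => by positivity)]
    refine lintegral_congr fun x => ?_
    rw [ENNReal.ofReal_pow (abs_nonneg _), ← Real.enorm_eq_ofReal_abs]
  have hI0 : 0 ≤ ∫ x in dCstar Q, |F (A *ᵥ x)| ^ P := integral_nonneg fun x => by positivity
  rw [← ENNReal.ofReal_rpow_of_nonneg (mul_nonneg (by positivity) hI0) (by positivity),
    ← ENNReal.mul_rpow_of_nonneg _ _ (by positivity)]
  refine ENNReal.rpow_le_rpow ?_ (by positivity)
  rw [ENNReal.ofReal_mul (by positivity), hI,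
    ENNReal.ofReal_inv_of_pos (ENNReal.toReal_pos hvol0 hvol), ENNReal.ofReal_toReal hvol,
    mul_assoc, ← mul_assoc (volume _), ENNReal.mul_inv_cancel hvol0 hvol, one_mul,
    lintegral_comp_mulVec hA (((hF.enorm).indicator (hmulVec _ hS)).pow_const P)]
  rw [← lintegral_indicator hS]
  refine mul_le_mul' (ENNReal.ofReal_le_ofReal hD) ?_
  refine lintegral_mono fun y => ?_
  have hy : A⁻¹ *ᵥ (A *ᵥ y) = y := by
    rw [Matrix.mulVec_mulVec, Matrix.nonsing_inv_mul _ (isUnit_iff_ne_zero.2 hA),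
      Matrix.one_mulVec]
  by_cases hyS : y ∈ dCstar Q
  · simp [Set.indicator, hy, hyS]
  · simp [Set.indicator, hy, hyS, hP0]

/-- The supremum of the averages of `F` over all `Q*` containing `Qt*`. -/
def starSup {m : ℕ} (Qt : ℤ × (Fin m → ℤ)) (F : (Fin m → ℝ) → ℝ) : ℝ≥0∞ :=
  ⨆ (Q : ℤ × (Fin m → ℤ)) (_ : dCstar Qt ⊆ dCstar Q), ENNReal.ofReal (avg (dCstar Q) F)

lemma measurable_proj {m : ℕ} (j : Corner m) : Measurable (proj j) :=
  measurable_pi_iff.2 fun _ => measurable_pi_apply _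

/-- The estimate on a ball of radius `2^n ℓ(Qt)` around `J p`. -/
lemma lintegral_ball_le {m : ℕ} (hm : 1 ≤ m) {Δ : ℝ} (hΔ : 1 < Δ)
    {J : Matrix (Idx m) (Fin m) ℝ} (hJ : ∀ j, IsReg Δ (Amat J j)) (Qt : ℤ × (Fin m → ℤ))
    {F : Corner m → (Fin m → ℝ) → ℝ} (hF : ∀ j, Measurable (F j))
    (hM : ∀ j, ∃ M : ℝ, ∀ x, |F j x| ≤ M) {a : ℕ} (ha : invBound m Δ ≤ 2 ^ a)
    {p : Fin m → ℝ} (hp : p ∈ dC Qt) (n : ℕ) :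
    ∫⁻ x : Idx m → ℝ, Set.indicator {x | ‖x - J *ᵥ p‖ ≤ 2 ^ n * (2:ℝ) ^ Qt.1}
        (fun x => ∏ j, ‖F j (proj j x)‖ₑ) x ≤
      ENNReal.ofReal ((detBound m Δ * (3 * (2 ^ (a + n) * (2:ℝ) ^ Qt.1)) ^ m) ^ 2) *
        ∏ j, starSup Qt fun x => F j (Amat J j *ᵥ x) := by
  set N := a + n with hN
  set Q := ancestor Qt N with hQ
  set P : ℕ := 2 ^ (m - 1) with hP
  have hP0 : (P : ℝ) ≠ 0 := by positivity
  have hD0 : 0 ≤ detBound m Δ := by unfold detBound; positivity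
  set G : Corner m → (Fin m → ℝ) → ℝ≥0∞ := fun j =>
    Set.indicator (((Amat J j)⁻¹ *ᵥ ·) ⁻¹' dCstar Q) (fun z => ‖F j z‖ₑ) with hG
  have hmulVec : ∀ B : Matrix (Fin m) (Fin m) ℝ, Measurable (B *ᵥ ·) := fun B =>
    (LinearMap.continuous_of_finiteDimensional (Matrix.toLin' B)).measurable
  have hGm : ∀ j, Measurable (G j) := fun j =>
    (hF j).enorm.indicator (hmulVec _ (measurableSet_dCstar Q))
  calc ∫⁻ x : Idx m → ℝ, Set.indicator {x | ‖x - J *ᵥ p‖ ≤ 2 ^ n * (2:ℝ) ^ Qt.1}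
        (fun x => ∏ j, ‖F j (proj j x)‖ₑ) x
      ≤ ∫⁻ x : Idx m → ℝ, ∏ j, G j (proj j x) := by
        refine lintegral_mono fun x => Set.indicator_apply_le' (fun hx => ?_) fun _ => zero_le
        refine Finset.prod_le_prod' fun j _ => ?_
        have hmem : proj j x ∈ ((Amat J j)⁻¹ *ᵥ ·) ⁻¹' dCstar Q := by
          refine mem_dCstar_ancestor hp ?_
          refine (norm_sub_le_of_proj_eq hΔ (hJ j) (x := x) ?_).trans ?_
          · rw [Matrix.mulVec_mulVec,
              Matrix.mul_nonsing_inv _ (isUnit_iff_ne_zero.2 (hJ j).2.1), Matrix.one_mulVec]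
          · rw [hN, pow_add, mul_assoc]
            exact mul_le_mul ha hx (norm_nonneg _) (by positivity)
        rw [hG]
        simp only [Set.indicator_of_mem hmem, le_refl]
    _ ≤ ∏ j, (∫⁻ z, G j z ^ P) ^ ((P : ℝ)⁻¹) := lintegral_prod_proj_le G hGm
    _ ≤ ∏ j : Corner m, (ENNReal.ofReal (detBound m Δ) * volume (dCstar Q)) ^ ((P : ℝ)⁻¹) *
          starSup Qt fun x => F j (Amat J j *ᵥ x) := by
        refine Finset.prod_le_prod' fun j _ => ?_
        obtain ⟨M, hMj⟩ := hM j
        refine (lintegral_indicator_pow_le_avg hm (hJ j).2.1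
          (abs_det_le fun i k => (abs_apply_le_opNorm _ i k).trans (hJ j).1) (hF j) hMj Q).trans ?_
        gcongr
        exact le_iSup₂ (f := fun (Q : ℤ × (Fin m → ℤ)) (_ : dCstar Qt ⊆ dCstar Q) =>
          ENNReal.ofReal (avg (dCstar Q) fun x => F j (Amat J j *ᵥ x))) Q
          (dCstar_subset_ancestor Qt N)
    _ = _ := by
        rw [Finset.prod_mul_distrib, Finset.prod_const, ← ENNReal.rpow_mul_natCast]
        have hcard : (P : ℝ)⁻¹ * ((Finset.univ : Finset (Corner m)).card : ℝ) = (2 : ℕ) := by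
          have : (Finset.univ : Finset (Corner m)).card = P * 2 := by
            rw [hP, ← pow_succ, Nat.sub_add_cancel hm]; simp
          rw [this, Nat.cast_mul, inv_mul_cancel_left₀ hP0]
        rw [hcard, ENNReal.rpow_natCast, volume_dCstar, hQ, ancestor_side,
          ← ENNReal.ofReal_pow (by positivity), ← ENNReal.ofReal_mul hD0,
          ← ENNReal.ofReal_pow (by positivity)]

/-- The constant of the off-diagonal estimate, where `2^a` bounds the inverses of the `A_j`. -/
def offDiagConst (m : ℕ) (Δ : ℝ) (a : ℕ) : ℝ :=
  2 * (kerBound m * 2 ^ (4 * m) * (2 * 2 ^ a) ^ (4 * m) *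
    (detBound m Δ * (3 * 2 ^ a) ^ m) ^ 2)

lemma exists_dyadic_scale {a : ℕ} {L r : ℝ} (hL : 0 < L) (hr : L ≤ 2 ^ a * r) :
    ∃ n : ℕ, r ≤ 2 ^ n * L ∧ 2 ^ n * L ≤ 2 * 2 ^ a * r := by
  have hr0 : 0 < r := pos_of_mul_pos_right (hL.trans_le hr) (by positivity)
  have hex : ∃ n : ℕ, r ≤ 2 ^ n * L := by
    obtain ⟨n, hn⟩ := pow_unbounded_of_one_lt (r / L) one_lt_two
    exact ⟨n, ((div_lt_iff₀ hL).1 hn).le⟩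
  classical
  refine ⟨Nat.find hex, Nat.find_spec hex, ?_⟩
  rcases h : Nat.find hex with _ | n
  · rw [pow_zero, one_mul]; nlinarith
  · have h1 : ¬ r ≤ 2 ^ n * L := Nat.find_min hex (by omega)
    have h2 : (1:ℝ) ≤ 2 ^ a := one_le_pow₀ one_le_two
    rw [pow_succ]
    nlinarith

/-- The spatial integral at a fixed point `(p, t)` with `p ∈ Qt` and `t ≤ ℓ(Qt)`. -/
lemma lintegral_kernel_le {m : ℕ} (hm : 1 ≤ m) {Δ : ℝ} (hΔ : 1 < Δ)
    {J : Matrix (Idx m) (Fin m) ℝ} (hJ : ∀ j, IsReg Δ (Amat J j)) (Qt : ℤ × (Fin m → ℤ))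
    {F : Corner m → (Fin m → ℝ) → ℝ} (hF : ∀ j, Measurable (F j))
    (hM : ∀ j, ∃ M : ℝ, ∀ x, |F j x| ≤ M) {a : ℕ} (ha : invBound m Δ ≤ 2 ^ a)
    {j0 : Corner m}
    (hj0 : Disjoint (Function.support fun x => F j0 (Amat J j0 *ᵥ x)) (dCstar Qt))
    {p : Fin m → ℝ} (hp : p ∈ dC Qt) {t : ℝ} (ht : 0 < t) (u : Idx m → ℝ) (i : Fin m) :
    ∫⁻ x : Idx m → ℝ, (∏ j, ‖F j (proj j x)‖ₑ) * ‖dil t (ddg i) (x - J *ᵥ p + t • u)‖ₑ ≤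
      ENNReal.ofReal (offDiagConst m Δ a * (1 + en u ^ (4 * m)) *
        (t ^ (2 * m) / ((2:ℝ) ^ Qt.1) ^ (2 * m))) *
        ∏ j, starSup Qt fun x => F j (Amat J j *ᵥ x) := by
  set L : ℝ := (2:ℝ) ^ Qt.1 with hLdef
  have hL : 0 < L := by positivity
  set S := ∏ j, starSup Qt fun x => F j (Amat J j *ᵥ x) with hS
  have hen : 0 ≤ en u := Real.sqrt_nonneg _
  have hK := kerBound_nonneg m
  have hD0 : 0 ≤ detBound m Δ := by unfold detBound; positivity
  set B : ℝ := kerBound m * 2 ^ (4 * m) * (1 + en u ^ (4 * m)) * t ^ (2 * m) *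
    (2 * 2 ^ a) ^ (4 * m) with hB
  have hB0 : 0 ≤ B := by positivity
  set b : ℕ → ℝ := fun n => B / (2 ^ n * L) ^ (4 * m) with hb
  have hb0 : ∀ n, 0 ≤ b n := fun n => by positivity
  set I : ℕ → (Idx m → ℝ) → ℝ≥0∞ := fun n =>
    Set.indicator {x | ‖x - J *ᵥ p‖ ≤ 2 ^ n * L} (fun x => ∏ j, ‖F j (proj j x)‖ₑ) with hI
  have hIm : ∀ n, Measurable (I n) := by
    intro n
    refine Measurable.indicator ?_ ?_
    · exact Finset.measurable_prod _ fun j _ => ((hF j).comp (measurable_proj j)).enorm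
    · exact measurableSet_le (measurable_id.sub_const _).norm measurable_const
  have hpt : ∀ x : Idx m → ℝ,
      (∏ j, ‖F j (proj j x)‖ₑ) * ‖dil t (ddg i) (x - J *ᵥ p + t • u)‖ₑ ≤
        ∑' n, ENNReal.ofReal (b n) * I n x := by
    intro x
    by_cases hx0 : F j0 (proj j0 x) = 0
    · rw [Finset.prod_eq_zero (Finset.mem_univ j0) (by simp [hx0]), zero_mul]
      exact zero_le
    set y := (Amat J j0)⁻¹ *ᵥ proj j0 x with hy
    have hxy : proj j0 x = Amat J j0 *ᵥ y := by
      rw [hy, Matrix.mulVec_mulVec,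
        Matrix.mul_nonsing_inv _ (isUnit_iff_ne_zero.2 (hJ j0).2.1), Matrix.one_mulVec]
    have hyS : y ∉ dCstar Qt := fun hmem =>
      Set.disjoint_left.1 hj0 (by simpa [Function.mem_support, ← hxy] using hx0) hmem
    have hw : L ≤ 2 ^ a * ‖x - J *ᵥ p‖ := (side_le_norm_sub hp hyS).trans
      ((norm_sub_le_of_proj_eq hΔ (hJ j0) hxy).trans
        (mul_le_mul_of_nonneg_right ha (norm_nonneg _)))
    have hw0 : 0 < ‖x - J *ᵥ p‖ := pos_of_mul_pos_right (hL.trans_le hw) (by positivity)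
    obtain ⟨n, hn1, hn2⟩ := exists_dyadic_scale hL hw
    refine le_trans ?_ (ENNReal.le_tsum n)
    have hIx : I n x = ∏ j, ‖F j (proj j x)‖ₑ :=
      Set.indicator_of_mem (s := {x | ‖x - J *ᵥ p‖ ≤ 2 ^ n * L}) hn1 _
    rw [hIx, mul_comm]
    gcongr
    rw [Real.enorm_eq_ofReal_abs]
    refine ENNReal.ofReal_le_ofReal ((abs_dil_ddg_le i ht u _ hw0).trans ?_)
    rw [hb, hB, div_le_div_iff₀ (by positivity) (by positivity), mul_assoc _ _ (‖_‖ ^ _), ← mul_pow]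
    gcongr
  calc ∫⁻ x : Idx m → ℝ, (∏ j, ‖F j (proj j x)‖ₑ) * ‖dil t (ddg i) (x - J *ᵥ p + t • u)‖ₑ
      ≤ ∫⁻ x, ∑' n, ENNReal.ofReal (b n) * I n x := lintegral_mono hpt
    _ = ∑' n, ENNReal.ofReal (b n) * ∫⁻ x, I n x := by
        rw [lintegral_tsum fun n => ((hIm n).const_mul _).aemeasurable]
        exact tsum_congr fun n => lintegral_const_mul _ (hIm n)
    _ ≤ ∑' n, ENNReal.ofReal (offDiagConst m Δ a * (1 + en u ^ (4 * m)) *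
        (t ^ (2 * m) / L ^ (2 * m)) * ((1 / 2) / 2 ^ n)) * S := by
        refine ENNReal.tsum_le_tsum fun n => ?_
        refine (mul_le_mul_right (lintegral_ball_le hm hΔ hJ Qt hF hM ha hp n) _).trans ?_
        rw [← mul_assoc, ← ENNReal.ofReal_mul (hb0 n)]
        refine mul_le_mul' (ENNReal.ofReal_le_ofReal ?_) le_rfl
        have h1 : b n * (detBound m Δ * (3 * (2 ^ (a + n) * L)) ^ m) ^ 2 =
            offDiagConst m Δ a * (1 + en u ^ (4 * m)) * (t ^ (2 * m) / L ^ (2 * m)) *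
              ((1 / 2) / (2 ^ n) ^ (2 * m)) := by
          have e4 : ∀ r : ℝ, r ^ (4 * m) = r ^ (2 * m) * r ^ (2 * m) := fun r => by
            rw [← pow_add]; congr 1; ring
          have e : (detBound m Δ * (3 * (2 ^ (a + n) * L)) ^ m) ^ 2 =
              (detBound m Δ * (3 * 2 ^ a) ^ m) ^ 2 * (2 ^ n * L) ^ (2 * m) := by
            have e3 : 3 * (2 ^ (a + n) * L) = 3 * 2 ^ a * (2 ^ n * L) := by rw [pow_add]; ring
            rw [e3, mul_pow _ (2 ^ n * L) m, ← mul_assoc, mul_pow _ ((2 ^ n * L) ^ m) 2, ← pow_mul']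
          rw [e, hb, hB, offDiagConst]
          simp only [e4 (2 ^ n * L)]
          have h2n : ((2:ℝ) ^ n * L) ^ (2 * m) = (2 ^ n) ^ (2 * m) * L ^ (2 * m) := mul_pow _ _ _
          rw [h2n]
          field_simp
        rw [h1]
        have hC : 0 ≤ offDiagConst m Δ a := by unfold offDiagConst; positivity
        gcongr
        exact le_self_pow₀ (one_le_pow₀ one_le_two) (by omega)
    _ = _ := by
        have hC : 0 ≤ offDiagConst m Δ a := by unfold offDiagConst; positivity
        rw [ENNReal.tsum_mul_right]
        congr 1
        rw [← ENNReal.ofReal_tsum_of_nonneg (fun n => by positivity)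
          ((summable_geometric_two' (1 : ℝ)).mul_left _), tsum_mul_left, tsum_geometric_two', mul_one]

/-- Lemma (off-diagonal estimate for a tree). -/
theorem statement9 (m : ℕ) (hm : 2 ≤ m) (Δ : ℝ) (hΔ : 1 < Δ) :
    ∃ C : ℝ≥0, ∀ J : Matrix (Idx m) (Fin m) ℝ, IsUnit (Jb1 J).det →
      (∀ j : Corner m, IsReg Δ (Amat J j)) →
      ∀ (T : Set (ℤ × (Fin m → ℤ))) (Qt : ℤ × (Fin m → ℤ)), ConvexTree T Qt →
      ∀ c : ℝ → ℂ, Measurable c →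
        (∀ᵐ t ∂(volume.restrict (Set.Ioi (0:ℝ))), ‖c t‖ ≤ 1) →
      ∀ u : Idx m → ℝ, ∀ i : Fin m,
      ∀ F : Corner m → (Fin m → ℝ) → ℝ,
        (∀ j, Measurable (F j) ∧ HasCompactSupport (F j) ∧ ∃ M : ℝ, ∀ x, |F j x| ≤ M) →
        (∃ j0 : Corner m,
          Disjoint (Function.support fun x => F j0 ((Amat J j0).mulVec x)) (dCstar Qt)) →
        ENNReal.ofReal ‖LambdaT J T c u i F‖ ≤
          C * volume (dC Qt) * ∏ j : Corner m,
            ⨆ (Q : ℤ × (Fin m → ℤ)) (_ : dCstar Qt ⊆ dCstar Q),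
              ENNReal.ofReal (avg (dCstar Q) fun x => F j ((Amat J j).mulVec x)) := by
  obtain ⟨a, ha⟩ := pow_unbounded_of_one_lt (invBound m Δ) (one_lt_two (α := ℝ))
  refine ⟨(offDiagConst m Δ a).toNNReal, ?_⟩
  intro J _ hJ T Qt hT c _ hc u i F hF ⟨j0, hj0⟩
  change _ ≤ _ * _ * ∏ j, starSup Qt fun x => F j (Amat J j *ᵥ x)
  set S := ∏ j, starSup Qt fun x => F j (Amat J j *ᵥ x) with hS
  set L : ℝ := (2:ℝ) ^ Qt.1 with hLdef
  have hL : 0 < L := by positivity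
  have hen : 0 ≤ en u := Real.sqrt_nonneg _
  have hC : 0 ≤ offDiagConst m Δ a := by
    have := kerBound_nonneg m
    unfold offDiagConst; positivity
  have hsub : Omega T ⊆ dC Qt ×ˢ Set.Ioc 0 L := by
    refine Set.iUnion₂_subset fun Q hQ => Set.prod_mono (hT.2.1 Q hQ) fun t ht => ⟨?_, ?_⟩
    · exact lt_trans (by positivity) ht.1
    · exact ht.2.le.trans (side_le_of_dC_subset (by omega) (hT.2.1 Q hQ))
  have hcz : ∀ᵐ z : (Fin m → ℝ) × ℝ, 0 < z.2 → ‖c z.2‖ ≤ 1 :=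
    Measure.quasiMeasurePreserving_snd.ae ((ae_restrict_iff' measurableSet_Ioi).1 hc)
  have hmeas : MeasurableSet (dC Qt ×ˢ Set.Ioc 0 L) := (measurableSet_dC Qt).prod measurableSet_Ioc
  rw [ofReal_norm]
  calc ‖LambdaT J T c u i F‖ₑ
      ≤ ∫⁻ z in dC Qt ×ˢ Set.Ioc 0 L, ‖c z.2 * Complex.ofReal ((1 + en u ^ (4*m))⁻¹ * (z.2)⁻¹ *
          ∫ x : Idx m → ℝ, (∏ j, F j (proj j x)) *
            dil z.2 (ddg i) (x - J.mulVec z.1 + z.2 • u))‖ₑ :=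
        (enorm_integral_le_lintegral_enorm _).trans (lintegral_mono_set hsub)
    _ ≤ ∫⁻ _ in dC Qt ×ˢ Set.Ioc 0 L, ENNReal.ofReal (offDiagConst m Δ a / L) * S := by
        refine lintegral_mono_ae ((ae_restrict_iff' hmeas).2 ?_)
        filter_upwards [hcz] with z hz hzmem
        obtain ⟨hp, ht, htL⟩ := hzmem
        have hinner : ‖∫ x : Idx m → ℝ, (∏ j, F j (proj j x)) *
            dil z.2 (ddg i) (x - J.mulVec z.1 + z.2 • u)‖ₑ ≤
            ENNReal.ofReal (offDiagConst m Δ a * (1 + en u ^ (4 * m)) *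
              (z.2 ^ (2 * m) / L ^ (2 * m))) * S := by
          refine (enorm_integral_le_lintegral_enorm _).trans (le_trans (le_of_eq ?_)
            (lintegral_kernel_le (by omega) hΔ hJ Qt (fun j => (hF j).1) (fun j => (hF j).2.2)
              ha.le hj0 hp ht u i))
          refine lintegral_congr fun x => ?_
          rw [enorm_mul]
          congr 1
          simp only [← ofReal_norm, norm_prod]
          exact ENNReal.ofReal_prod_of_nonneg fun j _ => norm_nonneg _
        have hcoef : ‖(1 + en u ^ (4 * m))⁻¹ * (z.2)⁻¹‖ₑ =
            ENNReal.ofReal ((1 + en u ^ (4 * m))⁻¹ * (z.2)⁻¹) := Real.enorm_of_nonneg (by positivity)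
        have hc1 : ‖c z.2‖ₑ ≤ 1 := by
          rw [← ofReal_norm]; exact ENNReal.ofReal_le_one.2 (hz ht)
        have hreal : ∀ r : ℝ, ‖(r : ℂ)‖ₑ = ‖r‖ₑ := fun r => by
          rw [← ofReal_norm, ← ofReal_norm, Complex.norm_real]
        rw [enorm_mul, hreal, enorm_mul, hcoef]
        refine (mul_le_mul' hc1 (mul_le_mul_right hinner _)).trans ?_
        rw [one_mul, ← mul_assoc, ← ENNReal.ofReal_mul (by positivity)]
        gcongr
        have hpow : z.2 ^ (2 * m) ≤ z.2 * L ^ (2 * m - 1) := by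
          obtain ⟨k, hk⟩ : ∃ k, 2 * m = k + 1 := ⟨2 * m - 1, by omega⟩
          rw [hk, Nat.add_sub_cancel, pow_succ']
          gcongr
        have hLpow : L ^ (2 * m) = L ^ (2 * m - 1) * L := by
          rw [← pow_succ]; congr 1; omega
        calc (1 + en u ^ (4 * m))⁻¹ * z.2⁻¹ * (offDiagConst m Δ a * (1 + en u ^ (4 * m)) *
              (z.2 ^ (2 * m) / L ^ (2 * m)))
            ≤ (1 + en u ^ (4 * m))⁻¹ * z.2⁻¹ * (offDiagConst m Δ a * (1 + en u ^ (4 * m)) *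
              (z.2 * L ^ (2 * m - 1) / L ^ (2 * m))) := by gcongr
          _ = offDiagConst m Δ a / L := by
              rw [hLpow]
              have : 0 < 1 + en u ^ (4 * m) := by positivity
              field_simp
    _ = _ := by
        rw [setLIntegral_const, Measure.volume_eq_prod, Measure.prod_prod, Real.volume_Ioc,
          sub_zero]
        have : ENNReal.ofReal (offDiagConst m Δ a / L) * ENNReal.ofReal L =
            ((offDiagConst m Δ a).toNNReal : ℝ≥0∞) := by
          rw [← ENNReal.ofReal_mul (by positivity), div_mul_cancel₀ _ hL.ne']; rfl
        rw [← this]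
        ring

end SBL
end
end

section
/- Let m ≥ 2 and 0 < l ≤ m be integers. Let J be a real 2m×m matrix whose blocks J^0, J^1 are invertible, whose rows satisfy J^0_h = J^1_h for 1 ≤ h ≤ l, and such that Π_j Π^T is invertible for every j ∈ 𝒞, where Π := Π^J. Then: (i) Π^T maps the subspace (I−Θ̃)ℝ^m into (I−Θ)ℝ^{2m}; (ii) for every j ∈ 𝒞, the map Π_j Π^T maps (I−Θ̃)ℝ^m onto itself; (iii) Θ Π^T Θ̃ = Θ Π^T. -/
open MeasureTheory Matrix
open scoped ENNReal NNReal BigOperators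

noncomputable section

namespace SBL

/-- A row shared by both blocks of `J` gives a signed unit row in each block of `Π^J`; in particular
it vanishes away from the position of that row. -/
lemma PiJ_apply_eq_zero {m : ℕ} {J : Matrix (Idx m) (Fin m) ℝ} (h1 : IsUnit (Jb1 J).det)
    {h : Fin m} (hrow : ∀ k, J (Sum.inl h) k = J (Sum.inr h) k) {i : Fin m} (hi : h ≠ i) :
    PiJ J h (Sum.inl i) = 0 ∧ PiJ J h (Sum.inr i) = 0 := by
  have hmul : (Jb0 J * (Jb1 J)⁻¹) h i = (Jb1 J * (Jb1 J)⁻¹) h i := by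
    simp [Matrix.mul_apply, Jb0, Jb1, hrow]
  rw [Matrix.mul_nonsing_inv _ h1, Matrix.one_apply_ne hi] at hmul
  simp [PiJ, hmul, Matrix.one_apply_ne hi]

lemma ThB_mulVec_PiJ_transpose_mulVec_Th {m l : ℕ} {J : Matrix (Idx m) (Fin m) ℝ}
    (h1 : IsUnit (Jb1 J).det)
    (hrows : ∀ h : Fin m, (h : ℕ) < l → ∀ k, J (Sum.inl h) k = J (Sum.inr h) k)
    (x : Fin m → ℝ) :
    ThB l *ᵥ ((PiJ J).transpose *ᵥ (Th l *ᵥ x)) = ThB l *ᵥ ((PiJ J).transpose *ᵥ x) := by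
  have key : ∀ h i : Fin m, (h : ℕ) < l → ¬ (i : ℕ) < l →
      PiJ J h (Sum.inl i) = 0 ∧ PiJ J h (Sum.inr i) = 0 := fun h i hh hi =>
    PiJ_apply_eq_zero h1 (hrows h hh) (by rintro rfl; exact hi hh)
  have hTh : Th l *ᵥ x = fun h : Fin m => (if (h : ℕ) < l then 0 else 1) * x h :=
    funext (Matrix.mulVec_diagonal _ _)
  ext c
  rw [hTh, ThB, Matrix.mulVec_diagonal, Matrix.mulVec_diagonal]
  simp only [Matrix.mulVec, dotProduct, Matrix.transpose_apply, Finset.mul_sum]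
  refine Finset.sum_congr rfl fun h _ => ?_
  by_cases hh : (h : ℕ) < l
  · rcases c with i | i <;> by_cases hi : (i : ℕ) < l <;> simp [hh, hi, key h i]
  · simp [hh]

lemma projM_mulVec {m : ℕ} (j : Corner m) (y : Idx m → ℝ) : projM j *ᵥ y = proj j y := by
  ext i
  simp [projM, proj, Matrix.mulVec, dotProduct]

lemma Th_mulVec_proj {m l : ℕ} (j : Corner m) (y : Idx m → ℝ) :
    Th l *ᵥ proj j y = proj j (ThB l *ᵥ y) := by
  ext i
  by_cases hj : j i = 0 <;> simp [Th, ThB, proj, sel, hj, Matrix.mulVec_diagonal]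

/-- For an idempotent matrix `P`, the range of `1 - P` is the kernel of `P`. -/
lemma mem_range_one_sub_mulVec_iff {n : Type*} [Fintype n] [DecidableEq n]
    {P : Matrix n n ℝ} (hP : P * P = P) (x : n → ℝ) :
    x ∈ Set.range (1 - P).mulVec ↔ P *ᵥ x = 0 := by
  constructor
  · rintro ⟨y, rfl⟩
    simp [Matrix.mulVec_mulVec, Matrix.mul_sub, hP]
  · intro hx
    exact ⟨x, by simp [Matrix.sub_mulVec, hx]⟩

/-- An invertible matrix mapping the kernel of `P` into itself maps it onto itself. -/
lemma image_mulVec_ker_eq {n : Type*} [Fintype n] [DecidableEq n] {M P : Matrix n n ℝ}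
    (hM : IsUnit M.det) (hMP : ∀ x, P *ᵥ x = 0 → P *ᵥ (M *ᵥ x) = 0) :
    (fun x => M *ᵥ x) '' {x | P *ᵥ x = 0} = {x | P *ᵥ x = 0} := by
  have hinj : Function.Injective M.mulVecLin :=
    Matrix.mulVec_injective_iff_isUnit.2 ((Matrix.isUnit_iff_isUnit_det M).2 hM)
  have hmap : (LinearMap.ker P.mulVecLin).map M.mulVecLin = LinearMap.ker P.mulVecLin :=
    Submodule.eq_of_le_of_finrank_eq
      (by rintro _ ⟨x, hx, rfl⟩; exact hMP x hx)
      (LinearEquiv.finrank_eq (Submodule.equivMapOfInjective _ hinj _).symm)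
  exact congrArg (fun V : Submodule ℝ (n → ℝ) => (V : Set (n → ℝ))) hmap

/-- Lemma 5.1 (structure of `Π^T` relative to the reflection symmetry subspaces). -/
theorem statement12 (m l : ℕ) (hm : 2 ≤ m) (hl0 : 0 < l) (hlm : l ≤ m)
    (J : Matrix (Idx m) (Fin m) ℝ)
    (h0 : IsUnit (Jb0 J).det) (h1 : IsUnit (Jb1 J).det)
    (hrows : ∀ h : Fin m, (h:ℕ) < l → ∀ k, J (Sum.inl h) k = J (Sum.inr h) k)
    (hreg : ∀ j : Corner m, IsUnit (projM j * (PiJ J).transpose).det) :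
    (∀ ξ : Fin m → ℝ,
      (PiJ J).transpose.mulVec (((1 : Matrix (Fin m) (Fin m) ℝ) - Th l).mulVec ξ) ∈
        Set.range ((1 : Matrix (Idx m) (Idx m) ℝ) - ThB l).mulVec) ∧
    (∀ j : Corner m,
      (fun ξ => (projM j * (PiJ J).transpose).mulVec ξ) ''
          Set.range ((1 : Matrix (Fin m) (Fin m) ℝ) - Th l).mulVec =
        Set.range ((1 : Matrix (Fin m) (Fin m) ℝ) - Th l).mulVec) ∧
    ThB (m := m) l * (PiJ J).transpose * Th l = ThB l * (PiJ J).transpose := by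
  have hiii := ThB_mulVec_PiJ_transpose_mulVec_Th h1 hrows
  have hTh : (Th l : Matrix (Fin m) (Fin m) ℝ) * Th l = Th l := by simp [Th]
  have hThB : (ThB l : Matrix (Idx m) (Idx m) ℝ) * ThB l = ThB l := by
    rw [ThB, Matrix.diagonal_mul_diagonal]
    congr 1
    ext (i | i) <;> simp
  have hker : ∀ x : Fin m → ℝ, Th l *ᵥ x = 0 → ThB l *ᵥ ((PiJ J).transpose *ᵥ x) = 0 := by
    intro x hx
    rw [← hiii, hx, Matrix.mulVec_zero, Matrix.mulVec_zero]
  refine ⟨fun ξ => ?_, fun j => ?_, Matrix.mulVec_injective (funext fun x => ?_)⟩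
  · rw [mem_range_one_sub_mulVec_iff hThB]
    exact hker _ ((mem_range_one_sub_mulVec_iff hTh _).1 ⟨ξ, rfl⟩)
  · rw [Set.ext (mem_range_one_sub_mulVec_iff hTh)]
    refine image_mulVec_ker_eq (hreg j) fun x hx => ?_
    rw [← Matrix.mulVec_mulVec, projM_mulVec, Th_mulVec_proj, hker x hx]
    rfl
  · have hx := hiii x
    rw [Matrix.mulVec_mulVec, Matrix.mulVec_mulVec, Matrix.mulVec_mulVec] at hx
    exact hx

end SBL
end
end

section
/- Let m ≥ 2 and 0 < l < m be integers and Δ > 1. There exists δ > 0, depending only on Δ and m, such that the following holds. Let J be a real 2m×m matrix whose blocks J^0, J^1 are invertible, whose rows satisfy J^0_h = J^1_h for 1 ≤ h ≤ l, and such that Π_j Π^T is Δ-regular for every j ∈ 𝒞, where Π := Π^J. Let D be a 2m×2m diagonal matrix with positive diagonal entries d^0_h = d^1_h =: d_h satisfying d_h ≤ d_{l+1} = d_i for all 1 ≤ h ≤ l < i ≤ m, and set W := {D Π^T Θ̃ ξ : ξ ∈ ℝ^m} ⊆ ℝ^{2m}. Then for every η ∈ W with |η| ≥ 1 there exists an index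 i with l < i ≤ m such that for all ζ ∈ W with |ζ − η| < δ one has |ζ^0_i| ≥ δ and |ζ^1_i| ≥ δ. -/
open MeasureTheory Matrix
open scoped ENNReal NNReal BigOperators

noncomputable section

namespace SBL

/-- Every entry of a matrix is bounded by its Euclidean operator norm. -/
lemma abs_entry_le_opNorm {ι κ : Type*} [Fintype ι] [Fintype κ] [DecidableEq κ]
    (A : Matrix ι κ ℝ) (i : ι) (k : κ) : |A i k| ≤ opNorm A := by
  have h := (LinearMap.toContinuousLinearMap (Matrix.toEuclideanLin A)).le_opNorm
    (EuclideanSpace.single k (1 : ℝ))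
  have h' := PiLp.norm_apply_le (Matrix.toEuclideanLin A (EuclideanSpace.single k (1 : ℝ))) i
  simp only [LinearMap.coe_toContinuousLinearMap', PiLp.norm_single, norm_one,
    mul_one] at h
  have hA : Matrix.toEuclideanLin A (EuclideanSpace.single k (1 : ℝ)) i = A i k := by
    simp [Matrix.toLpLin_apply]
  rw [hA, Real.norm_eq_abs] at h'
  exact h'.trans h

/-- If the entries of `A` are at most `a` and those of `w` at most `s`, then those of `A w` are
at most `card κ * (a * s)`. -/
lemma abs_mulVec_le {ι κ : Type*} [Fintype κ] {A : Matrix ι κ ℝ} {a s : ℝ} (ha : 0 ≤ a)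
    (hA : ∀ i k, |A i k| ≤ a) {w : κ → ℝ} (hw : ∀ k, |w k| ≤ s) (i : ι) :
    |(A *ᵥ w) i| ≤ Fintype.card κ * (a * s) := by
  calc |(A *ᵥ w) i| ≤ ∑ k, |A i k * w k| := Finset.abs_sum_le_sum_abs _ _
    _ ≤ ∑ _k : κ, a * s := Finset.sum_le_sum fun k _ => by
        rw [abs_mul]
        exact mul_le_mul (hA i k) (hw k) (abs_nonneg _) ha
    _ = Fintype.card κ * (a * s) := by simp

lemma abs_adjugate_le {n : Type*} [Fintype n] [DecidableEq n] {A : Matrix n n ℝ} {a : ℝ}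
    (ha : 1 ≤ a) (hA : ∀ i k, |A i k| ≤ a) (i k : n) :
    |A.adjugate i k| ≤ (Fintype.card n).factorial * a ^ Fintype.card n := by
  rw [Matrix.adjugate_apply, ← nsmul_eq_mul]
  refine Matrix.det_le (abv := AbsoluteValue.abs) fun p q => ?_
  rw [AbsoluteValue.abs_apply, Matrix.updateRow_apply]
  split_ifs
  · rw [Pi.single_apply]
    split_ifs <;> simp <;> linarith
  · exact hA p q

/-- Quantitative invertibility of a `Δ`-regular matrix in the sup norm. -/
lemma IsReg.abs_le {m : ℕ} {Δ : ℝ} (hΔ : 1 ≤ Δ) {A : Matrix (Fin m) (Fin m) ℝ}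
    (hA : IsReg Δ A) {w : Fin m → ℝ} {s : ℝ} (hs : ∀ i, |(A *ᵥ w) i| ≤ s) (k : Fin m) :
    |w k| ≤ Δ * (m * (m.factorial * Δ ^ m * s)) := by
  obtain ⟨hop, hdet, hinv⟩ := hA
  have hadj := abs_adjugate_le hΔ fun i k => (abs_entry_le_opNorm A i k).trans hop
  have h := abs_mulVec_le (by positivity) hadj hs k
  rw [Matrix.mulVec_mulVec, Matrix.adjugate_mul, Matrix.smul_mulVec, Matrix.one_mulVec,
    Pi.smul_apply, smul_eq_mul, abs_mul, Fintype.card_fin] at h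
  have hpos : 0 < |A.det| := abs_pos.mpr hdet
  calc |w k| = |A.det|⁻¹ * (|A.det| * |w k|) := by field_simp
    _ ≤ Δ * (m * (m.factorial * Δ ^ m * s)) := by gcongr

lemma projM_mul_mulVec {m : ℕ} {κ : Type*} [Fintype κ] (j : Corner m) (B : Matrix (Idx m) κ ℝ)
    (w : κ → ℝ) (i : Fin m) : ((projM j * B) *ᵥ w) i = (B *ᵥ w) (sel j i) := by
  rw [← Matrix.mulVec_mulVec]
  simp [projM, Matrix.mulVec, dotProduct]

lemma PiJ_transpose_mulVec_inl {m : ℕ} (J : Matrix (Idx m) (Fin m) ℝ) (w : Fin m → ℝ)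
    (i : Fin m) : ((PiJ J)ᵀ *ᵥ w) (Sum.inl i) = w i := by
  simp [PiJ, Matrix.transpose_fromCols, Matrix.fromRows_mulVec]

lemma abs_le_en {ι : Type*} [Fintype ι] (x : ι → ℝ) (k : ι) : |x k| ≤ en x := by
  rw [en, ← Real.sqrt_sq_eq_abs]
  exact Real.sqrt_le_sqrt (Finset.single_le_sum (f := fun i => x i ^ 2)
    (fun i _ => sq_nonneg _) (Finset.mem_univ k))

lemma en_le_card_mul {ι : Type*} [Fintype ι] {x : ι → ℝ} {s : ℝ} (hs : 0 ≤ s)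
    (hx : ∀ k, |x k| ≤ s) : en x ≤ Fintype.card ι * s := by
  refine Real.sqrt_le_iff.mpr ⟨by positivity, ?_⟩
  calc ∑ i, x i ^ 2 ≤ ∑ _i : ι, s ^ 2 :=
        Finset.sum_le_sum fun i _ => sq_le_sq' (abs_le.mp (hx i)).1 (abs_le.mp (hx i)).2
    _ = (Fintype.card ι : ℝ) * s ^ 2 := by simp
    _ ≤ (Fintype.card ι : ℝ) ^ 2 * s ^ 2 := by
        gcongr
        exact_mod_cast Nat.le_self_pow two_ne_zero _
    _ = (Fintype.card ι * s) ^ 2 := by ring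

/-- If every position `i ≥ l` has a coordinate of `D Π^T w` of size at most `s`, then `D Π^T w`
is bounded by a multiple of `s`. -/
lemma en_le_of_small_coordinates {m l : ℕ} (hlm : l < m) {Δ : ℝ} (hΔ : 1 < Δ)
    {J : Matrix (Idx m) (Fin m) ℝ} (hreg : ∀ j : Corner m, IsReg Δ (projM j * (PiJ J)ᵀ))
    {d : Fin m → ℝ} (hd : ∀ h, 0 < d h)
    (hle : ∀ h i : Fin m, (h : ℕ) < l → l ≤ (i : ℕ) → d h ≤ d i)
    (heq : ∀ i i' : Fin m, l ≤ (i : ℕ) → l ≤ (i' : ℕ) → d i = d i')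
    {w : Fin m → ℝ} (hw : ∀ h : Fin m, (h : ℕ) < l → w h = 0) {s : ℝ} (hs : 0 ≤ s)
    (hsmall : ∀ i : Fin m, l ≤ (i : ℕ) →
      |d i * ((PiJ J)ᵀ *ᵥ w) (Sum.inl i)| ≤ s ∨ |d i * ((PiJ J)ᵀ *ᵥ w) (Sum.inr i)| ≤ s) :
    en (Matrix.diagonal (Sum.elim d d) *ᵥ ((PiJ J)ᵀ *ᵥ w)) ≤
      2 * m * (m * (Δ * (Δ * (m * (m.factorial * Δ ^ m * s))))) := by
  classical
  set u := (PiJ J)ᵀ *ᵥ w with hu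
  have hu0 : ∀ i, u (Sum.inl i) = w i := PiJ_transpose_mulVec_inl J w
  set i₀ : Fin m := ⟨l, hlm⟩
  have hd₀ : ∀ h, d h ≤ d i₀ := fun h => by
    rcases lt_or_ge (h : ℕ) l with hh | hh
    · exact hle h i₀ hh le_rfl
    · exact (heq h i₀ hh le_rfl).le
  let j : Corner m := fun i =>
    if (i : ℕ) < l ∨ |d i * u (Sum.inl i)| ≤ s then 0 else 1
  have hv : ∀ k, |(d i₀ • w) k| ≤ Δ * (m * (m.factorial * Δ ^ m * s)) := by
    refine (hreg j).abs_le hΔ.le fun i => ?_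
    rw [Matrix.mulVec_smul, Pi.smul_apply, smul_eq_mul, projM_mul_mulVec, ← hu]
    rcases lt_or_ge (i : ℕ) l with hi | hi
    · have : sel j i = Sum.inl i := by simp [sel, j, hi]
      rw [this, hu0, hw i hi, mul_zero, abs_zero]
      exact hs
    · rw [heq i₀ i le_rfl hi]
      by_cases h : |d i * u (Sum.inl i)| ≤ s
      · have : sel j i = Sum.inl i := by simp only [sel, j, h, or_true, if_true]
        rwa [this]
      · have : sel j i = Sum.inr i := by simp [sel, j, -abs_mul, not_le.mp h, hi]
        rw [this]
        exact (hsmall i hi).resolve_left h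
  have hbound : ∀ (j : Corner m) (i : Fin m), |d i * u (sel j i)| ≤
      m * (Δ * (Δ * (m * (m.factorial * Δ ^ m * s)))) := fun j i => by
    have h := abs_mulVec_le (A := projM j * (PiJ J)ᵀ) (by linarith)
      (fun i k => (abs_entry_le_opNorm _ i k).trans (hreg j).1) hv i
    rw [Matrix.mulVec_smul, Pi.smul_apply, smul_eq_mul, projM_mul_mulVec, ← hu,
      Fintype.card_fin] at h
    refine le_trans ?_ h
    rw [abs_mul, abs_mul, abs_of_pos (hd i), abs_of_pos (hd i₀)]
    exact mul_le_mul_of_nonneg_right (hd₀ i) (abs_nonneg _)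
  refine (en_le_card_mul (s := m * (Δ * (Δ * (m * (m.factorial * Δ ^ m * s)))))
    (by positivity) ?_).trans_eq ?_
  · rintro (i | i) <;> rw [Matrix.mulVec_diagonal]
    · exact hbound (fun _ => 0) i
    · exact hbound (fun _ => 1) i
  · simp only [Fintype.card_sum, Fintype.card_fin, Nat.cast_add]
    ring

/-- Lemma 5.3 (uniform lower bounds on coordinates on the cone `W`). -/
theorem statement14 (m l : ℕ) (hm : 2 ≤ m) (hl0 : 0 < l) (hlm : l < m)
    (Δ : ℝ) (hΔ : 1 < Δ) :
    ∃ δ : ℝ, 0 < δ ∧ ∀ J : Matrix (Idx m) (Fin m) ℝ,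
      IsUnit (Jb0 J).det → IsUnit (Jb1 J).det →
      (∀ h : Fin m, (h:ℕ) < l → ∀ k, J (Sum.inl h) k = J (Sum.inr h) k) →
      (∀ j : Corner m, IsReg Δ (projM j * (PiJ J).transpose)) →
      ∀ d : Fin m → ℝ, (∀ h, 0 < d h) →
      (∀ h i : Fin m, (h:ℕ) < l → l ≤ (i:ℕ) → d h ≤ d i) →
      (∀ i i' : Fin m, l ≤ (i:ℕ) → l ≤ (i':ℕ) → d i = d i') →
      ∀ η ∈ Set.range (fun ξ : Fin m → ℝ =>
          (Matrix.diagonal (Sum.elim d d)).mulVec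
            ((PiJ J).transpose.mulVec ((Th l).mulVec ξ))),
        1 ≤ en η →
        ∃ i : Fin m, l ≤ (i:ℕ) ∧
          ∀ ζ ∈ Set.range (fun ξ : Fin m → ℝ =>
              (Matrix.diagonal (Sum.elim d d)).mulVec
                ((PiJ J).transpose.mulVec ((Th l).mulVec ξ))),
            en (ζ - η) < δ → δ ≤ |ζ (Sum.inl i)| ∧ δ ≤ |ζ (Sum.inr i)| := by
  set C : ℝ := 2 * m * (m * (Δ * (Δ * (m * (m.factorial * Δ ^ m))))) with hC
  have hm0 : (0 : ℝ) < m := by exact_mod_cast (by omega : 0 < m)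
  have hCpos : 0 < C := by positivity
  refine ⟨1 / (4 * C), by positivity, ?_⟩
  set δ : ℝ := 1 / (4 * C) with hδ
  have hδpos : 0 < δ := by positivity
  have hCδ : C * (2 * δ) = 1 / 2 := by rw [hδ]; field_simp; norm_num
  rintro J - - - hreg d hd hle heq η ⟨ξ, rfl⟩ hη
  have hw : ∀ h : Fin m, (h : ℕ) < l → (Th l *ᵥ ξ) h = 0 := fun h hh => by
    simp [Th, Matrix.mulVec_diagonal, hh]
  obtain ⟨i, hi, h0, h1⟩ : ∃ i : Fin m, l ≤ (i : ℕ) ∧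
      2 * δ < |d i * ((PiJ J)ᵀ *ᵥ (Th l *ᵥ ξ)) (Sum.inl i)| ∧
      2 * δ < |d i * ((PiJ J)ᵀ *ᵥ (Th l *ᵥ ξ)) (Sum.inr i)| := by
    by_contra! hcon
    have h := en_le_of_small_coordinates hlm hΔ hreg hd hle heq hw
      (by positivity : 0 ≤ 2 * δ) fun i hi => or_iff_not_imp_left.mpr fun h =>
        hcon i hi (not_le.mp h)
    have : 2 * m * (m * (Δ * (Δ * (m * (m.factorial * Δ ^ m * (2 * δ)))))) = C * (2 * δ) := by
      rw [hC]; ring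
    linarith
  refine ⟨i, hi, fun ζ _ hζ => ?_⟩
  have key : ∀ k, 2 * δ < |(Matrix.diagonal (Sum.elim d d) *ᵥ
      ((PiJ J)ᵀ *ᵥ (Th l *ᵥ ξ))) k| → δ ≤ |ζ k| := fun k hk => by
    have h := (abs_le_en _ k).trans_lt hζ
    rw [Pi.sub_apply, abs_sub_comm] at h
    have := abs_sub_abs_le_abs_sub ((Matrix.diagonal (Sum.elim d d) *ᵥ
      ((PiJ J)ᵀ *ᵥ (Th l *ᵥ ξ))) k) (ζ k)
    linarith
  exact ⟨key _ (by simpa only [Matrix.mulVec_diagonal, Sum.elim_inl] using h0),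
    key _ (by simpa only [Matrix.mulVec_diagonal, Sum.elim_inr] using h1)⟩

end SBL
end
end
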